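/- Let $\gamma>1$, $\rho_1>0$, $p_1>0$, and $u_1>0$ be given, and set $M_1^2 = u_1^2\rho_1/(\gamma p_1)$ (the square of the Mach number $u_1/c_1$ with $c_1=\sqrt{\gamma p_1/\rho_1}$). Then there exists a unique pair $(\rho_2,p_2)$ with $\rho_2>\rho_1$ and $p_2>0$ satisfying the Rankine–Hugoniot relations $u_1^2 = (p_2-p_1)(\rho_2-\rho_1)/(\rho_1\rho_2)$ and $p_2/p_1 = ((\gamma+1)\rho_2-(\gamma-1)\rho_1)/((\gamma+1)\rho_1-(\gamma-1)\rho_2)$. Moreover, this unique solution satisfies $(\gamma+1)\rho_1-(\gamma-1)\rho_2>0$ and $\rho_2/\rho_1 = \big(4+(\gamma+1)M_1^2+M_1\sqrt{16+(\gamma+1)^2M_1^2}\big)/\big(2(2+(\gamma-1)M_1^2)\big)$. -/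

import Mathlib

/-- Normal reflection: given state (1) with density `ρ1`, pressure `p1`, speed `u1 > 0`
for a polytropic gas with adiabatic exponent `γ > 1`, there is a unique state (2)
`(ρ2, p2)` with `ρ2 > ρ1`, `p2 > 0` satisfying the Rankine–Hugoniot relations, and it
satisfies `(γ+1)ρ1 - (γ-1)ρ2 > 0` and the explicit formula for `ρ2/ρ1` in terms of the
Mach number `M1 = u1/c1`, `c1 = √(γ p1/ρ1)`. -/
theorem normal_reflection_unique_state2
    (γ ρ1 p1 u1 M1 : ℝ) (hγ : 1 < γ) (hρ1 : 0 < ρ1) (hp1 : 0 < p1) (hu1 : 0 < u1)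
    (hM1 : M1 = Real.sqrt (u1 ^ 2 * ρ1 / (γ * p1))) :
    (∃! s : ℝ × ℝ, ρ1 < s.1 ∧ 0 < s.2 ∧
        u1 ^ 2 = (s.2 - p1) * (s.1 - ρ1) / (ρ1 * s.1) ∧
        s.2 / p1 = ((γ + 1) * s.1 - (γ - 1) * ρ1) / ((γ + 1) * ρ1 - (γ - 1) * s.1)) ∧
    (∀ ρ2 p2 : ℝ, ρ1 < ρ2 → 0 < p2 →
        u1 ^ 2 = (p2 - p1) * (ρ2 - ρ1) / (ρ1 * ρ2) →
        p2 / p1 = ((γ + 1) * ρ2 - (γ - 1) * ρ1) / ((γ + 1) * ρ1 - (γ - 1) * ρ2) →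
        0 < (γ + 1) * ρ1 - (γ - 1) * ρ2 ∧
        ρ2 / ρ1 = (4 + (γ + 1) * M1 ^ 2 + M1 * Real.sqrt (16 + (γ + 1) ^ 2 * M1 ^ 2)) /
          (2 * (2 + (γ - 1) * M1 ^ 2))) := by
  have hγ0 : 0 < γ := by linarith
  have hMpos : 0 < M1 := by rw [hM1]; positivity
  have hMsq : M1 ^ 2 = u1 ^ 2 * ρ1 / (γ * p1) := by
    rw [hM1]; exact Real.sq_sqrt (by positivity)
  have hu : u1 ^ 2 * ρ1 = M1 ^ 2 * (γ * p1) := by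
    rw [hMsq]; field_simp
  have hSsq : Real.sqrt (16 + (γ + 1) ^ 2 * M1 ^ 2) ^ 2 = 16 + (γ + 1) ^ 2 * M1 ^ 2 :=
    Real.sq_sqrt (by positivity)
  have hS0 : 0 < Real.sqrt (16 + (γ + 1) ^ 2 * M1 ^ 2) := by positivity
  set S := Real.sqrt (16 + (γ + 1) ^ 2 * M1 ^ 2) with hS
  clear_value S
  have hm : 0 < M1 ^ 2 := by positivity
  have hA : 0 < 2 + (γ - 1) * M1 ^ 2 := by nlinarith
  obtain ⟨T, hT⟩ : ∃ T, T = (4 + (γ + 1) * M1 ^ 2 + M1 * S) / (2 * (2 + (γ - 1) * M1 ^ 2)) :=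
    ⟨_, rfl⟩
  rw [← hT]
  have hTm : 2 * (2 + (γ - 1) * M1 ^ 2) * T = 4 + (γ + 1) * M1 ^ 2 + M1 * S := by
    rw [hT]; field_simp
  have hTq : (2 + (γ - 1) * M1 ^ 2) * T ^ 2 - (4 + (γ + 1) * M1 ^ 2) * T + 2 = 0 := by
    have h1 : (2 * (2 + (γ - 1) * M1 ^ 2) * T - (4 + (γ + 1) * M1 ^ 2)) ^ 2
        = M1 ^ 2 * (16 + (γ + 1) ^ 2 * M1 ^ 2) := by
      rw [hTm, ← hSsq]; ring
    have h2 : (4 * (2 + (γ - 1) * M1 ^ 2)) *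
        ((2 + (γ - 1) * M1 ^ 2) * T ^ 2 - (4 + (γ + 1) * M1 ^ 2) * T + 2) = 0 := by
      linear_combination h1
    rcases mul_eq_zero.mp h2 with h | h
    · linarith
    · exact h
  have hT1 : 1 < T := by
    have hSγ : (γ + 1) * M1 < S := by
      apply lt_of_pow_lt_pow_left₀ 2 hS0.le
      rw [hSsq]; nlinarith
    have h3 : (γ + 1) * M1 ^ 2 < M1 * S := by nlinarith
    rw [hT, lt_div_iff₀ (by positivity)]
    nlinarith
  have key : ∀ ρ2 p2 : ℝ, ρ1 < ρ2 → 0 < p2 →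
        u1 ^ 2 = (p2 - p1) * (ρ2 - ρ1) / (ρ1 * ρ2) →
        p2 / p1 = ((γ + 1) * ρ2 - (γ - 1) * ρ1) / ((γ + 1) * ρ1 - (γ - 1) * ρ2) →
        0 < (γ + 1) * ρ1 - (γ - 1) * ρ2 ∧ ρ2 / ρ1 = T := by
    intro ρ2 p2 hρ hp2 h1 h2
    have hρ2 : 0 < ρ2 := by linarith
    have hN : 0 < (γ + 1) * ρ2 - (γ - 1) * ρ1 := by nlinarith
    have hq : 0 < p2 / p1 := by positivity
    have hD : 0 < (γ + 1) * ρ1 - (γ - 1) * ρ2 := by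
      by_contra hc
      have := div_nonpos_of_nonneg_of_nonpos hN.le (not_lt.mp hc)
      linarith
    refine ⟨hD, ?_⟩
    obtain ⟨t, ht⟩ : ∃ t, t = ρ2 / ρ1 := ⟨_, rfl⟩
    have hρt : ρ2 = t * ρ1 := by rw [ht]; field_simp
    have ht1 : 1 < t := by rw [ht, lt_div_iff₀ hρ1]; linarith
    rw [← ht]
    rw [div_eq_div_iff hp1.ne' hD.ne'] at h2
    rw [eq_div_iff (by positivity)] at h1
    subst hρt
    have h2' : p2 * ((γ + 1) - (γ - 1) * t) = p1 * ((γ + 1) * t - (γ - 1)) := by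
      apply mul_right_cancel₀ hρ1.ne'
      linear_combination h2
    have h1' : M1 ^ 2 * (γ * p1) * t = (p2 - p1) * (t - 1) := by
      apply mul_right_cancel₀ hρ1.ne'
      linear_combination h1 - t * ρ1 * hu
    have htq : (2 + (γ - 1) * M1 ^ 2) * t ^ 2 - (4 + (γ + 1) * M1 ^ 2) * t + 2 = 0 := by
      have : (γ * p1) ≠ 0 := by positivity
      apply mul_left_cancel₀ this
      linear_combination (-((γ + 1) - (γ - 1) * t)) * h1' - (t - 1) * h2'
    have hf : (t - T) * ((2 + (γ - 1) * M1 ^ 2) * (t + T) - (4 + (γ + 1) * M1 ^ 2)) = 0 := by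
      linear_combination htq - hTq
    rcases mul_eq_zero.mp hf with h | h
    · linarith
    · exfalso
      have h5 : (2 + (γ - 1) * M1 ^ 2) * (t * T) = 2 := by
        linear_combination T * h - hTq
      have h6 : 0 < (2 + (γ - 1) * M1 ^ 2) * ((t - 1) * (T - 1)) :=
        mul_pos hA (mul_pos (by linarith) (by linarith))
      nlinarith
  refine ⟨?_, key⟩
  have hD' : 0 < (γ + 1) - (γ - 1) * T := by
    have h : M1 ^ 2 * T * ((γ + 1) - (γ - 1) * T) = 2 * (T - 1) ^ 2 := by
      linear_combination -hTq
    have h' : 0 < M1 ^ 2 * T * ((γ + 1) - (γ - 1) * T) := by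
      rw [h]; have : 0 < T - 1 := by linarith
      positivity
    exact (mul_pos_iff_of_pos_left (mul_pos hm (by linarith))).mp h'
  have hN' : 0 < (γ + 1) * T - (γ - 1) := by nlinarith
  have hT0 : 0 < T := by linarith
  refine ⟨(T * ρ1, p1 * (((γ + 1) * T - (γ - 1)) / ((γ + 1) - (γ - 1) * T))), ⟨?_, ?_, ?_, ?_⟩, ?_⟩
  · show ρ1 < T * ρ1
    nlinarith
  · show 0 < p1 * (((γ + 1) * T - (γ - 1)) / ((γ + 1) - (γ - 1) * T))
    positivity
  · show u1 ^ 2 = (p1 * (((γ + 1) * T - (γ - 1)) / ((γ + 1) - (γ - 1) * T)) - p1) * (T * ρ1 - ρ1)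
      / (ρ1 * (T * ρ1))
    obtain ⟨D, hDD⟩ : ∃ D, D = (γ + 1) - (γ - 1) * T := ⟨_, rfl⟩
    rw [← hDD] at hD' ⊢
    have e : p1 * (((γ + 1) * T - (γ - 1)) / D) - p1 = p1 * (2 * γ * (T - 1)) / D := by
      field_simp
      rw [hDD]; ring
    rw [e, eq_div_iff (by positivity), div_mul_eq_mul_div, eq_div_iff hD'.ne', hDD]
    linear_combination (T * ρ1 * ((γ + 1) - (γ - 1) * T)) * hu - γ * p1 * ρ1 * hTq
  · show p1 * (((γ + 1) * T - (γ - 1)) / ((γ + 1) - (γ - 1) * T)) / p1 =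
      ((γ + 1) * (T * ρ1) - (γ - 1) * ρ1) / ((γ + 1) * ρ1 - (γ - 1) * (T * ρ1))
    rw [mul_div_cancel_left₀ _ hp1.ne',
      show (γ + 1) * (T * ρ1) - (γ - 1) * ρ1 = ((γ + 1) * T - (γ - 1)) * ρ1 by ring,
      show (γ + 1) * ρ1 - (γ - 1) * (T * ρ1) = ((γ + 1) - (γ - 1) * T) * ρ1 by ring,
      mul_div_mul_right _ _ hρ1.ne']
  · rintro ⟨r, p⟩ ⟨h1, h2, h3, h4⟩
    dsimp only at h1 h2 h3 h4
    obtain ⟨hD, hr⟩ := key r p h1 h2 h3 h4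
    have hr' : r = T * ρ1 := by rw [← hr]; field_simp
    subst hr'
    rw [show (γ + 1) * (T * ρ1) - (γ - 1) * ρ1 = ((γ + 1) * T - (γ - 1)) * ρ1 by ring,
      show (γ + 1) * ρ1 - (γ - 1) * (T * ρ1) = ((γ + 1) - (γ - 1) * T) * ρ1 by ring,
      mul_div_mul_right _ _ hρ1.ne'] at h4
    rw [← h4, mul_div_cancel₀ _ hp1.ne']
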